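/- Let m ≥ 2, and let X be a random variable on a product Ω of m probability spaces that is strongly difference-bounded by (b, c, ς) with b ≤ m, c = A·sqrt(m log m) for a constant A ≥ 1, and ς ≤ 1/m³. Then there is a constant C (depending only on A) such that P(|X − E[X]| > C·m·log m) ≤ 4/m. -/

import Mathlib

open MeasureTheory

/-!
Reveal the coordinates one at a time. Each increment of the resulting Doob martingale of `X` is
bounded by `c + b * p`, where `p` is the conditional probability of the bad set `B`: changing the
revealed coordinate moves `X` by at most `c` off `B` and by at most `b` on `B`. As long as `p < α`,
Hoeffding's lemma controls the exponential moment of the increment; by Markov's inequality, each of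
the `n` steps has `p ≥ α` with probability at most `P(B) / α`, which is the additive error term.
Chernoff's bound then gives the Kutin–McDiarmid inequality, and `α = 1 / m` gives the theorem.
-/

section Product

open ProbabilityTheory

variable {α β : Type*} [MeasurableSpace α] [MeasurableSpace β]
  {μ : Measure α} {ν : Measure β} [IsProbabilityMeasure μ]

lemma abs_integral_le_add_mul_measureReal {g : α → ℝ} {S : Set α} (hS : MeasurableSet S) {b c : ℝ}
    (hc₀ : 0 ≤ c) (hc : ∀ x ∉ S, |g x| ≤ c) (hb : ∀ x, |g x| ≤ b) :
    |∫ x, g x ∂μ| ≤ c + b * μ.real S := by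
  have hint : Integrable (S.indicator fun _ => b) μ := (integrable_const b).indicator hS
  calc |∫ x, g x ∂μ| ≤ ∫ x, (c + S.indicator (fun _ => b) x) ∂μ := by
        rw [← Real.norm_eq_abs]
        refine norm_integral_le_of_norm_le ((integrable_const c).add hint) (.of_forall fun x => ?_)
        by_cases hx : x ∈ S
        · simpa [hx] using (hb x).trans (le_add_of_nonneg_left hc₀)
        · simpa [hx] using hc x hx
    _ = c + b * μ.real S := by
        rw [integral_add (integrable_const c) hint, integral_indicator_const b hS]
        simp [mul_comm]

lemma hasSubgaussianMGF_sub_integral_of_abs_le {Y : α → ℝ} (hY : AEMeasurable Y μ) {d : ℝ}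
    (hd : ∀ᵐ x ∂μ, |Y x - μ[Y]| ≤ d) :
    HasSubgaussianMGF (fun x => Y x - μ[Y]) (‖d‖₊ ^ 2) μ := by
  have h := hasSubgaussianMGF_of_mem_Icc (a := μ[Y] - d) (b := μ[Y] + d) hY
    (hd.mono fun x hx => Set.mem_Icc_iff_abs_le.1 (by rwa [abs_sub_comm]))
  have hwidth : ‖(μ[Y] + d) - (μ[Y] - d)‖₊ / 2 = ‖d‖₊ := by
    rw [show (μ[Y] + d) - (μ[Y] - d) = 2 * d by ring, nnnorm_mul, Real.nnnorm_two,
      mul_div_cancel_left₀ _ two_ne_zero]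
  rwa [hwidth] at h

variable [IsProbabilityMeasure ν]

lemma abs_integral_prodMk_sub_integral_le {F : α × β → ℝ} (hF : Integrable F (μ.prod ν)) {x : α}
    (hFx : Integrable (fun y => F (x, y)) ν) {S : Set (α × β)} (hS : MeasurableSet S) {b c : ℝ}
    (hc₀ : 0 ≤ c) (hc : ∀ p ∉ S, |F p - F (x, p.2)| ≤ c) (hb : ∀ p, |F p - F (x, p.2)| ≤ b) :
    |∫ y, F (x, y) ∂ν - ∫ p, F p ∂(μ.prod ν)| ≤ c + b * (μ.prod ν).real S := by
  have hsection : ∫ p : α × β, F (x, p.2) ∂(μ.prod ν) = ∫ y, F (x, y) ∂ν := by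
    simpa using integral_fun_snd (μ := μ) (ν := ν) fun y => F (x, y)
  rw [← hsection, abs_sub_comm, ← integral_sub hF (hFx.comp_snd μ)]
  exact abs_integral_le_add_mul_measureReal hS hc₀ hc hb

lemma hasSubgaussianMGF_integral_prodMk {F : α × β → ℝ} (hF : Integrable F (μ.prod ν))
    (hFx : ∀ x, Integrable (fun y => F (x, y)) ν) {S : Set (α × β)} (hS : MeasurableSet S)
    {b c δ : ℝ} (hb₀ : 0 ≤ b) (hc₀ : 0 ≤ c) (hc : ∀ x, ∀ p ∉ S, |F p - F (x, p.2)| ≤ c)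
    (hb : ∀ x p, |F p - F (x, p.2)| ≤ b) (hSδ : (μ.prod ν).real S ≤ δ) :
    HasSubgaussianMGF (fun x => ∫ y, F (x, y) ∂ν - ∫ p, F p ∂(μ.prod ν))
      (‖c + b * δ‖₊ ^ 2) μ := by
  rw [integral_prod F hF]
  refine hasSubgaussianMGF_sub_integral_of_abs_le hF.integral_prod_left.aemeasurable
    (.of_forall fun x => ?_)
  rw [← integral_prod F hF]
  exact (abs_integral_prodMk_sub_integral_le hF (hFx x) hS hc₀ (hc x) (hb x)).trans (by gcongr)

lemma measureReal_prod_tail_le_of_hasSubgaussianMGF {F : α × β → ℝ} (hF : Measurable F)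
    {S : Set (α × β)} (hS : MeasurableSet S) {Y : α → ℝ} {e : ℝ} {σ : NNReal}
    (hY : HasSubgaussianMGF (fun x => Y x - e) σ μ) {K l r : ℝ} (hK : 0 ≤ K)
    (htail : ∀ x t, ν.real {y | t < F (x, y) - Y x} ≤
      K * Real.exp (-(l * t)) + r * ν.real (Prod.mk x ⁻¹' S)) (t : ℝ) :
    (μ.prod ν).real {p | t < F p - e} ≤
      K * Real.exp (σ * l ^ 2 / 2 - l * t) + r * (μ.prod ν).real S := by
  have hT : MeasurableSet {p | t < F p - e} :=
    measurableSet_lt measurable_const (hF.sub_const e)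
  have fubini {U : Set (α × β)} (hU : MeasurableSet U) :
      ∫ x, ν.real (Prod.mk x ⁻¹' U) ∂μ = (μ.prod ν).real U := by
    simp_rw [measureReal_def]
    rw [integral_toReal (measurable_measure_prodMk_left hU).aemeasurable
      (.of_forall fun x => measure_lt_top ν _), Measure.prod_apply hU]
  have hsection (x : α) : ν.real (Prod.mk x ⁻¹' {p | t < F p - e}) ≤
      K * Real.exp (-(l * t)) * Real.exp (l * (Y x - e)) + r * ν.real (Prod.mk x ⁻¹' S) := by
    convert htail x (t - (Y x - e)) using 2
    · ext y
      simp only [Set.mem_preimage, Set.mem_ofPred_eq]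
      constructor <;> intro h <;> linarith
    · rw [mul_assoc, ← Real.exp_add]
      ring_nf
  have hint {U : Set (α × β)} (hU : MeasurableSet U) :
      Integrable (fun x => ν.real (Prod.mk x ⁻¹' U)) μ :=
    Measure.integrable_measure_prodMk_left hU (measure_ne_top (μ.prod ν) U)
  have hexp := (hY.integrable_exp_mul l).const_mul (K * Real.exp (-(l * t)))
  have hbad := (hint hS).const_mul r
  calc (μ.prod ν).real {p | t < F p - e}
      = ∫ x, ν.real (Prod.mk x ⁻¹' {p | t < F p - e}) ∂μ := (fubini hT).symm
    _ ≤ ∫ x, (K * Real.exp (-(l * t)) * Real.exp (l * (Y x - e)) +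
          r * ν.real (Prod.mk x ⁻¹' S)) ∂μ :=
        integral_mono (hint hT) (hexp.add hbad) hsection
    _ = K * Real.exp (-(l * t)) * mgf (fun x => Y x - e) μ l + r * (μ.prod ν).real S := by
        rw [integral_add hexp hbad, integral_const_mul, integral_const_mul, fubini hS, mgf]
    _ ≤ K * Real.exp (-(l * t)) * Real.exp (σ * l ^ 2 / 2) + r * (μ.prod ν).real S := by
        gcongr
        exact hY.mgf_le l
    _ = K * Real.exp (σ * l ^ 2 / 2 - l * t) + r * (μ.prod ν).real S := by
        rw [mul_assoc, ← Real.exp_add, neg_add_eq_sub]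

end Product

section Pi

variable {ι : Type*} {Ω : ι → Type*}

/-- `X` changes by at most `c` when one coordinate of a point outside `B` is changed. A random
variable is strongly difference-bounded by `(b, c, ς)` when this holds for `(B, c)` with
`P(B) = ς`, and for `(∅, b)`. -/
def BoundedDifferencesOff (X : (∀ i, Ω i) → ℝ) (B : Set (∀ i, Ω i)) (c : ℝ) : Prop :=
  ∀ ω ω' : ∀ i, Ω i, (∃ k, ∀ j, j ≠ k → ω j = ω' j) → ω ∉ B → |X ω - X ω'| ≤ c

namespace BoundedDifferencesOff

variable {X : (∀ i, Ω i) → ℝ} {B : Set (∀ i, Ω i)} {b c : ℝ}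

lemma mono {B' : Set (∀ i, Ω i)} {c' : ℝ} (h : BoundedDifferencesOff X B c) (hB : B ⊆ B')
    (hc : c ≤ c') : BoundedDifferencesOff X B' c' :=
  fun ω ω' hω hωB => (h ω ω' hω fun hmem => hωB (hB hmem)).trans hc

lemma neg (h : BoundedDifferencesOff X B c) : BoundedDifferencesOff (fun ω => -X ω) B c :=
  fun ω ω' hω hωB => by simpa only [neg_sub_neg, abs_sub_comm] using h ω ω' hω hωB

end BoundedDifferencesOff

section Piecewise

variable [DecidableEq ι]

lemma measurable_finset_piecewise [∀ i, MeasurableSpace (Ω i)] {α : Type*}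
    [MeasurableSpace α] (s : Finset ι) {f g : α → ∀ i, Ω i} (hf : Measurable f)
    (hg : Measurable g) : Measurable fun x => s.piecewise (f x) (g x) := by
  refine measurable_pi_iff.2 fun i => ?_
  by_cases hi : i ∈ s
  · simpa [hi] using measurable_pi_iff.1 hf i
  · simpa [hi] using measurable_pi_iff.1 hg i

lemma piecewise_insert_update {s : Finset ι} {a : ι} (ha : a ∉ s)
    (x y : ∀ i, Ω i) (w : Ω a) :
    (insert a s).piecewise (Function.update y a w) x =
      s.piecewise y (Function.update x a w) := by
  ext i
  rcases eq_or_ne i a with rfl | hia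
  · simp [ha]
  · simp [Finset.piecewise, hia]

lemma measurable_piecewise_left [∀ i, MeasurableSpace (Ω i)] (s : Finset ι) (x : ∀ i, Ω i) :
    Measurable fun y => s.piecewise y x :=
  measurable_finset_piecewise s measurable_id measurable_const

end Piecewise

namespace BoundedDifferencesOff

variable {X : (∀ i, Ω i) → ℝ} {b : ℝ}

lemma abs_sub_le_card_mul [Fintype ι] (h : BoundedDifferencesOff X ∅ b) (ω ω' : ∀ i, Ω i) :
    |X ω - X ω'| ≤ Fintype.card ι * b := by
  classical
  suffices ∀ s : Finset ι, |X (s.piecewise ω ω') - X ω'| ≤ s.card * b by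
    simpa using this Finset.univ
  intro s
  induction s using Finset.induction_on with
  | empty => simp
  | insert a s ha ih =>
    have hstep : |X ((insert a s).piecewise ω ω') - X (s.piecewise ω ω')| ≤ b := by
      rw [Finset.piecewise_insert]
      exact h _ _ ⟨a, fun j hj => Function.update_of_ne hj _ _⟩ (Set.notMem_empty _)
    rw [Finset.card_insert_of_notMem ha]
    push_cast
    linarith [abs_sub_le (X ((insert a s).piecewise ω ω')) (X (s.piecewise ω ω')) (X ω')]

lemma integrable_comp [Finite ι] [∀ i, MeasurableSpace (Ω i)] (h : BoundedDifferencesOff X ∅ b)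
    (hX : Measurable X) {α : Type*} [MeasurableSpace α] {ρ : Measure α} [IsFiniteMeasure ρ]
    {f : α → ∀ i, Ω i} (hf : Measurable f) : Integrable (fun x => X (f x)) ρ := by
  cases nonempty_fintype ι
  rcases isEmpty_or_nonempty α with _ | ⟨⟨x₀⟩⟩
  · exact .of_isEmpty
  · have hdiff : Integrable (fun x => X (f x) - X (f x₀)) ρ :=
      .of_bound ((hX.comp hf).sub_const _).aestronglyMeasurable (Fintype.card ι * b)
        (.of_forall fun x => h.abs_sub_le_card_mul _ _)
    exact (integrable_add_iff_integrable_left (integrable_const (-X (f x₀)))).1 hdiff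

end BoundedDifferencesOff

variable [Fintype ι] [∀ i, MeasurableSpace (Ω i)]

lemma measurePreserving_update_pi [DecidableEq ι] (μ : ∀ i, Measure (Ω i))
    [∀ i, IsProbabilityMeasure (μ i)] (a : ι) :
    MeasurePreserving (fun p : Ω a × (∀ i, Ω i) => Function.update p.2 a p.1)
      ((μ a).prod (Measure.pi μ)) (Measure.pi μ) := by
  have hmeas : Measurable fun p : Ω a × (∀ i, Ω i) => Function.update p.2 a p.1 :=
    measurable_update'.comp measurable_swap
  refine ⟨hmeas, (Measure.pi_eq fun s hs => ?_).symm⟩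
  have hbox : (fun p : Ω a × (∀ i, Ω i) => Function.update p.2 a p.1) ⁻¹' Set.univ.pi s =
      s a ×ˢ Set.univ.pi (Function.update s a Set.univ) := by
    ext p
    simp only [Set.mem_preimage, Set.mem_prod, Set.mem_univ_pi]
    grind
  rw [Measure.map_apply hmeas (.univ_pi hs), hbox, Measure.prod_prod, Measure.pi_pi,
    ← Finset.mul_prod_erase _ _ (Finset.mem_univ a), Function.update_self, measure_univ, one_mul,
    ← Finset.mul_prod_erase _ _ (Finset.mem_univ a)]
  congr 1
  exact Finset.prod_congr rfl fun i hi => by rw [Function.update_of_ne (Finset.ne_of_mem_erase hi)]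

/-- The law of the point obtained from `x` by replacing its coordinates in `s` by independent
samples from `μ`, that is, the conditional law under `Measure.pi μ` given that the coordinates
outside `s` agree with those of `x`. -/
noncomputable def resample [DecidableEq ι] (μ : ∀ i, Measure (Ω i)) (s : Finset ι)
    (x : ∀ i, Ω i) : Measure (∀ i, Ω i) :=
  (Measure.pi μ).map fun y => s.piecewise y x

section Resample

variable [DecidableEq ι] (μ : ∀ i, Measure (Ω i))

lemma resample_univ (x : ∀ i, Ω i) : resample μ Finset.univ x = Measure.pi μ := by
  simp [resample]

variable [∀ i, IsProbabilityMeasure (μ i)]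

instance (s : Finset ι) (x : ∀ i, Ω i) : IsProbabilityMeasure (resample μ s x) :=
  Measure.isProbabilityMeasure_map (measurable_piecewise_left s x).aemeasurable

lemma resample_empty (x : ∀ i, Ω i) : resample μ ∅ x = Measure.dirac x := by
  simp [resample]

lemma resample_insert {s : Finset ι} {a : ι} (ha : a ∉ s) (x : ∀ i, Ω i) :
    resample μ (insert a s) x = ((μ a).prod (Measure.pi μ)).map fun p =>
      s.piecewise p.2 (Function.update x a p.1) := by
  have h := measurePreserving_update_pi μ a
  rw [resample, ← h.map_eq, Measure.map_map (measurable_piecewise_left _ x) h.measurable]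
  simp only [Function.comp_def, piecewise_insert_update ha, h.map_eq]

end Resample

namespace BoundedDifferencesOff

variable {X : (∀ i, Ω i) → ℝ} {B : Set (∀ i, Ω i)} {b c : ℝ}
  {μ : ∀ i, Measure (Ω i)} [∀ i, IsProbabilityMeasure (μ i)] {α l : ℝ}

lemma measureReal_resample_insert_tail_le [DecidableEq ι] (hc : BoundedDifferencesOff X B c)
    (hb : BoundedDifferencesOff X ∅ b) (hX : Measurable X) (hB : MeasurableSet B) (hb₀ : 0 ≤ b)
    (hc₀ : 0 ≤ c) {s : Finset ι} {K r : ℝ} (hK : 0 ≤ K)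
    (htail : ∀ x t, (resample μ s x).real {ω | t < X ω - ∫ ω, X ω ∂resample μ s x} ≤
      K * Real.exp (-(l * t)) + r * (resample μ s x).real B)
    {a : ι} (ha : a ∉ s) {x : ∀ i, Ω i} (hBα : (resample μ (insert a s) x).real B ≤ α) (t : ℝ) :
    (resample μ (insert a s) x).real {ω | t < X ω - ∫ ω, X ω ∂resample μ (insert a s) x} ≤
      K * Real.exp ((c + b * α) ^ 2 * l ^ 2 / 2 - l * t) +
        r * (resample μ (insert a s) x).real B := by
  set T : Ω a × (∀ i, Ω i) → ∀ i, Ω i :=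
    fun p => s.piecewise p.2 (Function.update x a p.1) with hT_def
  have hT : Measurable T :=
    measurable_finset_piecewise s measurable_snd ((measurable_update x).comp measurable_fst)
  have hdiff (w : Ω a) (p : Ω a × (∀ i, Ω i)) : ∃ k, ∀ j, j ≠ k → T p j = T (w, p.2) j :=
    ⟨a, fun j hj => by by_cases hjs : j ∈ s <;> simp [hT_def, hjs, hj]⟩
  have htail' (w : Ω a) (u : ℝ) :
      (Measure.pi μ).real {y | u < X (T (w, y)) - ∫ y, X (T (w, y)) ∂Measure.pi μ} ≤
        K * Real.exp (-(l * u)) + r * (Measure.pi μ).real (Prod.mk w ⁻¹' (T ⁻¹' B)) := by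
    have hs := measurable_piecewise_left s (Function.update x a w)
    have h := htail (Function.update x a w) u
    rwa [resample, integral_map hs.aemeasurable hX.aestronglyMeasurable,
      map_measureReal_apply hs (measurableSet_lt measurable_const (hX.sub_const _)),
      map_measureReal_apply hs hB] at h
  rw [resample_insert μ ha, map_measureReal_apply hT hB] at hBα
  have hmean := hasSubgaussianMGF_integral_prodMk (hb.integrable_comp hX hT)
    (fun w => hb.integrable_comp hX (hT.comp measurable_prodMk_left)) (hT hB) hb₀ hc₀
    (fun w p hp => hc _ _ (hdiff w p) hp) (fun w p => hb _ _ (hdiff w p) (Set.notMem_empty _)) hBα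
  rw [resample_insert μ ha, integral_map hT.aemeasurable hX.aestronglyMeasurable,
    map_measureReal_apply hT (measurableSet_lt measurable_const (hX.sub_const _)),
    map_measureReal_apply hT hB]
  simpa using measureReal_prod_tail_le_of_hasSubgaussianMGF (hX.comp hT) (hT hB) hmean hK htail' t

lemma measureReal_resample_tail_le [DecidableEq ι] (hc : BoundedDifferencesOff X B c)
    (hb : BoundedDifferencesOff X ∅ b) (hX : Measurable X) (hB : MeasurableSet B) (hb₀ : 0 ≤ b)
    (hc₀ : 0 ≤ c) (hα : 0 < α) (hl : 0 ≤ l) (s : Finset ι) (x : ∀ i, Ω i) (t : ℝ) :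
    (resample μ s x).real {ω | t < X ω - ∫ ω, X ω ∂resample μ s x} ≤
      Real.exp (s.card * ((c + b * α) ^ 2 * l ^ 2 / 2)) * Real.exp (-(l * t)) +
        s.card / α * (resample μ s x).real B := by
  induction s using Finset.induction_on generalizing x t with
  | empty =>
    rcases le_or_gt 0 t with ht | ht
    · have hS : MeasurableSet {ω | t < X ω - X x} :=
        measurableSet_lt measurable_const (hX.sub_const _)
      simpa [resample_empty, integral_dirac' _ _ hX.stronglyMeasurable, measureReal_def,
        Measure.dirac_apply' _ hS, ht.not_gt] using Real.exp_nonneg _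
    · simpa using measureReal_le_one.trans (Real.one_le_exp (by nlinarith))
  | insert a s ha ih =>
    rw [Finset.card_insert_of_notMem ha, Nat.cast_succ]
    rcases le_or_gt α ((resample μ (insert a s) x).real B) with hBα | hBα
    · have hone : 1 ≤ (s.card + 1 : ℝ) / α * (resample μ (insert a s) x).real B := by
        rw [div_mul_eq_mul_div, one_le_div hα]
        exact hBα.trans (le_mul_of_one_le_left measureReal_nonneg (by simp))
      exact measureReal_le_one.trans (hone.trans (le_add_of_nonneg_left (by positivity)))
    · refine (measureReal_resample_insert_tail_le hc hb hX hB hb₀ hc₀ (Real.exp_nonneg _) ih ha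
        hBα.le t).trans (add_le_add (le_of_eq ?_) ?_)
      · rw [← Real.exp_add, ← Real.exp_add]
        ring_nf
      · gcongr
        exact le_add_of_nonneg_right zero_le_one

-- When the denominator vanishes, the exponent is `0` and the bound is trivial.
lemma measureReal_sub_integral_tail_le (hc : BoundedDifferencesOff X B c)
    (hb : BoundedDifferencesOff X ∅ b) (hX : Measurable X) (hb₀ : 0 ≤ b) (hc₀ : 0 ≤ c)
    (hα : 0 < α) {t : ℝ} (ht : 0 ≤ t) :
    (Measure.pi μ).real {ω | t < X ω - ∫ ω, X ω ∂Measure.pi μ} ≤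
      Real.exp (-t ^ 2 / (2 * Fintype.card ι * (c + b * α) ^ 2)) +
        Fintype.card ι / α * (Measure.pi μ).real B := by
  classical
  obtain ⟨x⟩ : Nonempty (∀ i, Ω i) := nonempty_of_isProbabilityMeasure (Measure.pi μ)
  set V : ℝ := Fintype.card ι * (c + b * α) ^ 2 with hV
  have h := (hc.mono (subset_toMeasurable (Measure.pi μ) B) le_rfl).measureReal_resample_tail_le
    (μ := μ) (l := t / V) hb hX (measurableSet_toMeasurable _ _) hb₀ hc₀ hα (by positivity)
    Finset.univ x t
  have hexponent : Fintype.card ι * ((c + b * α) ^ 2 * (t / V) ^ 2 / 2) + -(t / V * t) =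
      -t ^ 2 / (2 * Fintype.card ι * (c + b * α) ^ 2) := by
    calc _ = V * (t / V) ^ 2 / 2 - t / V * t := by rw [hV]; ring
      _ = -t ^ 2 / (2 * V) := by
        rcases eq_or_ne V 0 with hV₀ | hV₀
        · simp [hV₀]
        · field_simp
          ring
      _ = _ := by rw [hV, mul_assoc]
  rwa [resample_univ, ← Real.exp_add, Finset.card_univ, hexponent,
    measureReal_def _ (toMeasurable _ _), measure_toMeasurable] at h

theorem measureReal_abs_sub_integral_tail_le (hc : BoundedDifferencesOff X B c)
    (hb : BoundedDifferencesOff X ∅ b) (hX : Measurable X) (hb₀ : 0 ≤ b) (hc₀ : 0 ≤ c)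
    (hα : 0 < α) {t : ℝ} (ht : 0 ≤ t) :
    (Measure.pi μ).real {ω | t < |X ω - ∫ ω, X ω ∂Measure.pi μ|} ≤
      2 * (Real.exp (-t ^ 2 / (2 * Fintype.card ι * (c + b * α) ^ 2)) +
        Fintype.card ι / α * (Measure.pi μ).real B) := by
  have hupper := hc.measureReal_sub_integral_tail_le (μ := μ) hb hX hb₀ hc₀ hα ht
  have hlower := hc.neg.measureReal_sub_integral_tail_le (μ := μ) hb.neg hX.neg hb₀ hc₀ hα ht
  have hsplit : {ω | t < |X ω - ∫ ω, X ω ∂Measure.pi μ|} =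
      {ω | t < X ω - ∫ ω, X ω ∂Measure.pi μ} ∪
        {ω | t < -X ω - ∫ ω, -X ω ∂Measure.pi μ} := by
    ext ω
    simp only [Set.mem_ofPred_eq, Set.mem_union, lt_abs, integral_neg, neg_sub, sub_neg_eq_add,
      neg_add_eq_sub]
  rw [hsplit, two_mul]
  exact (measureReal_union_le _ _).trans (add_le_add hupper hlower)

end BoundedDifferencesOff

end Pi

-- With `c + 1 ≤ 2c`, where `c = A √(m log m)`, the exponent is at most `-2 log m`.
lemma exp_neg_sq_div_le_one_div {A m : ℝ} (hA : 1 ≤ A) (hm : 0 < m) (hlog : 1 ≤ m * Real.log m) :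
    Real.exp (-(4 * A * m * Real.log m) ^ 2 /
      (2 * m * (A * Real.sqrt (m * Real.log m) + 1) ^ 2)) ≤ 1 / m := by
  set R := Real.sqrt (m * Real.log m)
  have hR₁ : 1 ≤ R := Real.one_le_sqrt.2 hlog
  have hR_sq : R ^ 2 = m * Real.log m := Real.sq_sqrt (by linarith)
  have hlog_pos : 0 < Real.log m := pos_of_mul_pos_right (by linarith) hm.le
  have hdenom : A * R + 1 ≤ 2 * (A * R) := by nlinarith
  rw [one_div, ← Real.exp_log (inv_pos.2 hm), Real.exp_le_exp, Real.log_inv, neg_div,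
    neg_le_neg_iff]
  calc Real.log m ≤ 2 * Real.log m := by linarith
    _ = (4 * A * m * Real.log m) ^ 2 / (2 * m * (2 * (A * R)) ^ 2) := by
        have hsq : (2 * (A * R)) ^ 2 = 4 * A ^ 2 * (m * Real.log m) := by rw [← hR_sq]; ring
        rw [hsq]
        field_simp
        norm_num
    _ ≤ (4 * A * m * Real.log m) ^ 2 / (2 * m * (A * R + 1) ^ 2) := by gcongr

theorem stmt_19_general (A : ℝ) {ι : Type*} [Fintype ι] {m : ℕ} (hι : Fintype.card ι = m)
    (hm : 2 ≤ m) {Ω : ι → Type*} [∀ i, MeasurableSpace (Ω i)] {μ : ∀ i, Measure (Ω i)}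
    [∀ i, IsProbabilityMeasure (μ i)] {X : (∀ i, Ω i) → ℝ} (hX : Measurable X)
    {B : Set (∀ i, Ω i)} (hB : (Measure.pi μ).real B ≤ 1 / (m : ℝ) ^ 3)
    (hc : BoundedDifferencesOff X B (A * Real.sqrt (m * Real.log m)))
    (hb : BoundedDifferencesOff X ∅ m) :
    Measure.pi μ {ω | 4 * max A 1 * m * Real.log m < |X ω - ∫ ω, X ω ∂Measure.pi μ|} ≤
      ENNReal.ofReal (4 / m) := by
  have hm₂ : (2 : ℝ) ≤ m := Nat.ofNat_le_cast.2 hm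
  have hm₀ : (0 : ℝ) < m := by linarith
  have hlog : 1 ≤ m * Real.log m := by
    nlinarith [Real.log_two_gt_d9, Real.log_le_log two_pos hm₂]
  have htail := (hc.mono subset_rfl (mul_le_mul_of_nonneg_right (le_max_left A 1)
    (Real.sqrt_nonneg _))).measureReal_abs_sub_integral_tail_le (μ := μ) hb hX hm₀.le
    (by positivity) (one_div_pos.2 hm₀) (t := 4 * max A 1 * m * Real.log m)
    (by nlinarith [le_max_right A 1])
  have hexp := exp_neg_sq_div_le_one_div (le_max_right A 1) hm₀ hlog
  have hbad : m / (1 / m) * (Measure.pi μ).real B ≤ 1 / m := by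
    calc m / (1 / m) * (Measure.pi μ).real B ≤ m / (1 / m) * (1 / m ^ 3) := by gcongr
      _ = 1 / m := by field_simp
  rw [hι, mul_one_div_cancel hm₀.ne'] at htail
  rw [← ofReal_measureReal]
  refine ENNReal.ofReal_le_ofReal (htail.trans ?_)
  calc _ ≤ 2 * (1 / (m : ℝ) + 1 / m) := by gcongr
    _ = 4 / m := by ring

/-- Instantiation of the Kutin–McDiarmid extension: if `X` on a product of `m ≥ 2`
probability spaces is strongly difference-bounded by `(b, c, ς)` with `b ≤ m`,
`c = A·√(m log m)` (`A ≥ 1`), and `ς ≤ 1/m³`, then there is a constant `C` depending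
only on `A` with `P(|X − E[X]| > C·m·log m) ≤ 4/m`. -/
theorem stmt_19 (A : ℝ) (hA : 1 ≤ A) :
    ∃ C : ℝ, 0 < C ∧
      ∀ (m : ℕ), 2 ≤ m →
      ∀ (Ω : Fin m → Type*) [∀ i, MeasurableSpace (Ω i)]
        (μ : ∀ i, Measure (Ω i)) [∀ i, IsProbabilityMeasure (μ i)]
        (X : (∀ i, Ω i) → ℝ), Measurable X →
      ∀ (B : Set (∀ i, Ω i)), MeasurableSet B →
      ∀ b c ς : ℝ, 0 ≤ b → b ≤ m → c = A * Real.sqrt (m * Real.log m) →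
        0 ≤ ς → ς ≤ 1 / (m : ℝ) ^ 3 →
      Measure.pi μ B = ENNReal.ofReal ς →
      (∀ ω ω' : ∀ i, Ω i, (∃ k, ∀ j, j ≠ k → ω j = ω' j) → ω ∉ B →
        |X ω - X ω'| ≤ c) →
      (∀ ω ω' : ∀ i, Ω i, (∃ k, ∀ j, j ≠ k → ω j = ω' j) → |X ω - X ω'| ≤ b) →
      Measure.pi μ {ω | C * m * Real.log m < |X ω - ∫ x, X x ∂(Measure.pi μ)|}
        ≤ ENNReal.ofReal (4 / (m : ℝ)) := by
  refine ⟨4 * max A 1, by positivity, ?_⟩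
  intro m hm Ω _ μ _ X hX B _ b c ς _ hbm hc hς hς_le hμB hdiff_off hdiff
  have hB : (Measure.pi μ).real B ≤ 1 / (m : ℝ) ^ 3 := by
    rwa [measureReal_def, hμB, ENNReal.toReal_ofReal hς]
  exact stmt_19_general A (Fintype.card_fin m) hm hX hB (hc ▸ hdiff_off)
    fun ω ω' hω _ => (hdiff ω ω' hω).trans hbm
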